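/- arXiv:1906.02949 — 2 statements merged into one kernel-verified Lean document; each statement's English description precedes it below -/
import Mathlib

section
/- Let p be an odd prime, let m > 1 and d > 1, and let G = G(p^m, p^m, p^d). Suppose A is a subgroup of Aut(G) of order p^(2m+d−2)·(p²−1) which contains a normal Sylow p-subgroup, and let g ∈ G be an element of order p^m. Then G ≠ {φ(g) : φ ∈ A} ∪ Φ(G), where Φ(G) is the Frattini subgroup of G. -/
/-- The carrier of the group `G(p^m, p^n, p^d)`: the set
`ZMod (p^m) × ZMod (p^n) × ZMod (p^d)`. -/
def GCar (p m n d : ℕ) : Type :=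
  ZMod (p ^ m) × ZMod (p ^ n) × ZMod (p ^ d)

/-- The multiplication of the group `G(p^m, p^n, p^d)`:
`(x1,x2,x3)·(y1,y2,y3) = (x1+y1, x2+y2, x3+y3 − x̄2·ȳ1)`,
where the bars denote reduction modulo `p^d`. -/
def Gmul (p m n d : ℕ) (x y : GCar p m n d) : GCar p m n d :=
  (x.1 + y.1, x.2.1 + y.2.1,
    x.2.2 + y.2.2 - (ZMod.cast x.2.1 : ZMod (p ^ d)) * (ZMod.cast y.1 : ZMod (p ^ d)))

set_option linter.unnecessarySeqFocus false in
/-- The group `G(p^m, p^n, p^d)` (for `d ≤ n ≤ m`). The elements `a = (1,0,0)`,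
`b = (0,1,0)`, `c = (0,0,1)` satisfy the defining relations
`a^(p^m) = b^(p^n) = c^(p^d) = 1`, `b⁻¹ab = ac`, `a⁻¹ca = b⁻¹cb = c`,
and every element of the group is uniquely of the form `a^(x1) b^(x2) c^(x3)`. -/
def Ggroup (p m n d : ℕ) (hdn : d ≤ n) (hdm : d ≤ m) : Group (GCar p m n d) where
  mul := Gmul p m n d
  one := ((0, 0, 0) : ZMod (p ^ m) × ZMod (p ^ n) × ZMod (p ^ d))
  inv x := ((-x.1, -x.2.1,
    -x.2.2 - (ZMod.cast x.2.1 : ZMod (p ^ d)) * (ZMod.cast x.1 : ZMod (p ^ d))) :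
      ZMod (p ^ m) × ZMod (p ^ n) × ZMod (p ^ d))
  mul_assoc x y z := by
    have h1 : (p : ℕ) ^ d ∣ p ^ n := pow_dvd_pow p hdn
    have h2 : (p : ℕ) ^ d ∣ p ^ m := pow_dvd_pow p hdm
    show Gmul p m n d (Gmul p m n d x y) z = Gmul p m n d x (Gmul p m n d y z)
    refine Prod.ext ?_ (Prod.ext ?_ ?_) <;>
      simp [Gmul, ZMod.cast_add h1, ZMod.cast_add h2] <;> ring
  one_mul x := by
    show Gmul p m n d ((0, 0, 0) : ZMod (p ^ m) × ZMod (p ^ n) × ZMod (p ^ d)) x = x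
    refine Prod.ext ?_ (Prod.ext ?_ ?_) <;> simp [Gmul, ZMod.cast_zero]
  mul_one x := by
    show Gmul p m n d x ((0, 0, 0) : ZMod (p ^ m) × ZMod (p ^ n) × ZMod (p ^ d)) = x
    refine Prod.ext ?_ (Prod.ext ?_ ?_) <;> simp [Gmul, ZMod.cast_zero]
  inv_mul_cancel x := by
    have h1 : (p : ℕ) ^ d ∣ p ^ n := pow_dvd_pow p hdn
    have h2 : (p : ℕ) ^ d ∣ p ^ m := pow_dvd_pow p hdm
    show Gmul p m n d _ x = ((0, 0, 0) : ZMod (p ^ m) × ZMod (p ^ n) × ZMod (p ^ d))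
    refine Prod.ext ?_ (Prod.ext ?_ ?_) <;>
      simp [Gmul, ZMod.cast_neg h1, ZMod.cast_neg h2] <;> ring

/-!
Suppose `A` moves `g` onto every element outside `Φ(G)`. Counting shows that `A` then acts regularly
on `G ∖ Φ(G)`, and `A` has even order, so it contains an involution `t`. Since `t` has no fixed
point outside `Φ(G)` and `G` has odd order, coprime action shows that `t` inverts `G / G'`. An
automorphism `k ∈ A` trivial on `G / G'` has the form `x ↦ x * f x` for a homomorphism `f` into the
cyclic central subgroup `G'`; its kernel is not contained in `Φ(G)`, as otherwise `G` would be
cyclic, so `k` has a fixed point outside `Φ(G)` and `k = 1`. Hence `t` is central in `A`. Now `t`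
inverts some element outside `Φ(G)`, hence by transitivity all of them, which forces `G` to be
abelian.
-/

section Frattini

variable {G : Type*} [Group G]

theorem isCyclic_of_ker_le_frattini [IsCoatomic (Subgroup G)] {C : Type*} [Group C] [IsCyclic C]
    (f : G →* C) (hf : f.ker ≤ frattini G) : IsCyclic G := by
  obtain ⟨⟨_, g, rfl⟩, hg⟩ := IsCyclic.exists_generator (α := f.range)
  have hgen : Subgroup.zpowers g = ⊤ := by
    refine frattini_nongenerating ((Subgroup.eq_top_iff' _).mpr fun x => ?_)
    obtain ⟨n, hn⟩ := Subgroup.mem_zpowers_iff.mp (hg ⟨f x, x, rfl⟩)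
    have hfx : f g ^ n = f x := congrArg Subtype.val hn
    have hker : (g ^ n)⁻¹ * x ∈ f.ker := by
      rw [MonoidHom.mem_ker, map_mul, map_inv, map_zpow, hfx, inv_mul_cancel]
    rw [← mul_inv_cancel_left (g ^ n) x]
    exact Subgroup.mul_mem_sup (Subgroup.zpow_mem_zpowers g n) (hf hker)
  exact ⟨g, (Subgroup.eq_top_iff' _).mp hgen⟩

theorem sq_le_index_frattini [Finite G] {p : ℕ} [Fact p.Prime] (hG : IsPGroup p G)
    (hcyc : ¬ IsCyclic G) : p ^ 2 ≤ (frattini G).index := by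
  obtain ⟨j, hj⟩ := hG.index (frattini G)
  have hp : p.Prime := Fact.out
  rw [hj]
  refine Nat.pow_le_pow_right hp.pos (not_lt.mp fun hlt => hcyc ?_)
  have hquot : IsCyclic (G ⧸ frattini G) :=
    isCyclic_of_card_dvd_prime (p := p) <| by
      rw [← Subgroup.index_eq_card, hj]
      exact (pow_dvd_pow p (Nat.le_of_lt_succ hlt)).trans (pow_one p).dvd
  exact isCyclic_of_ker_le_frattini (QuotientGroup.mk' (frattini G)) (QuotientGroup.ker_mk' _).le

theorem le_ncard_compl_frattini {p k : ℕ} [Fact p.Prime] (hcard : Nat.card G = p ^ k)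
    (hcyc : ¬ IsCyclic G) :
    p ^ (k - 2) * (p ^ 2 - 1) ≤ ((frattini G : Set G)ᶜ).ncard := by
  have hp : p.Prime := Fact.out
  have : Finite G := Nat.finite_of_card_ne_zero (hcard ▸ pow_ne_zero k hp.ne_zero)
  have hindex := sq_le_index_frattini (IsPGroup.of_card hcard) hcyc
  have hmul := (frattini G).card_mul_index
  have hk : 2 ≤ k := by
    refine (Nat.pow_le_pow_iff_right hp.one_lt).mp (hindex.trans ?_)
    exact hcard ▸ Nat.le_of_dvd Nat.card_pos (frattini G).index_dvd_card
  have hpow : p ^ k = p ^ (k - 2) * p ^ 2 := by rw [← pow_add, Nat.sub_add_cancel hk]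
  have hle : Nat.card (frattini G) ≤ p ^ (k - 2) := by
    refine Nat.le_of_mul_le_mul_right ?_ (pow_pos hp.pos 2)
    rw [← hpow, ← hcard, ← hmul]
    exact Nat.mul_le_mul_left _ hindex
  have hncard : (frattini G : Set G).ncard = Nat.card (frattini G) := rfl
  rw [Set.ncard_compl, hcard, hpow, Nat.mul_sub, mul_one, hncard]
  exact Nat.sub_le_sub_left hle _

end Frattini

section RegularAction

/-- The action of `M` restricts to a regular, i.e. sharply transitive, action on the set `T`. The
set `T` is not assumed to be `M`-invariant: transitivity and freeness are only tested on its
elements. -/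
structure ActsRegularlyOn (M : Type*) {α : Type*} [Monoid M] [MulAction M α] (T : Set α) :
    Prop where
  exists_smul_eq : ∀ x ∈ T, ∀ y ∈ T, ∃ m : M, m • x = y
  eq_one_of_smul_eq : ∀ m : M, ∀ x ∈ T, m • x = x → m = 1

theorem actsRegularlyOn_of_subset_orbit {M α : Type*} [Group M] [Finite M] [MulAction M α]
    {T : Set α} {a : α} (hT : T ⊆ MulAction.orbit M a) (hcard : Nat.card M ≤ T.ncard) :
    ActsRegularlyOn M T where
  exists_smul_eq x hx y hy := by
    have hxy : y ∈ MulAction.orbit M x := MulAction.orbit_eq_iff.mpr (hT hx) ▸ hT hy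
    exact hxy
  eq_one_of_smul_eq m x hx hmx := by
    have hle : Nat.card M ≤ Nat.card (MulAction.orbit M a) :=
      hcard.trans (Set.ncard_le_ncard hT (Set.finite_range _))
    have hinj : Function.Injective fun m : M => m • a := fun m n h =>
      (Set.rangeFactorization_surjective.bijective_of_nat_card_le hle).injective (Subtype.ext h)
    obtain ⟨n, rfl⟩ := hT hx
    exact mul_eq_right.mp (hinj ((mul_smul m n a).trans hmx))

end RegularAction

section InvolutiveAutomorphism

variable {G : Type*} [Group G]

theorem mem_zpowers_sq (hodd : Odd (Nat.card G)) (x : G) : x ∈ Subgroup.zpowers (x ^ 2) :=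
  mem_zpowers_pow_iff.mpr <|
    Nat.coprime_two_left.mpr (hodd.of_dvd_nat (orderOf_dvd_natCard x))

/-- The coprime action argument: `z = x⁻¹ * t x` is inverted by `t`, so if `c` is the power of `z`
with `c ^ 2 = z`, then `x * c` is fixed by `t`. -/
theorem mem_sup_zpowers_inv_mul_map (hodd : Odd (Nat.card G)) {t : MulAut G}
    (ht : Function.Involutive t) {S : Subgroup G} (hS : ∀ x, t x = x → x ∈ S) (x : G) :
    x ∈ S ⊔ Subgroup.zpowers (x⁻¹ * t x) := by
  set z := x⁻¹ * t x with hz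
  have htz : t z = z⁻¹ := by rw [hz, map_mul, map_inv, ht, mul_inv_rev, inv_inv]
  obtain ⟨n, hn⟩ := Subgroup.mem_zpowers_iff.mp (mem_zpowers_sq hodd z)
  have hfixed : t (x * z ^ n) = x * z ^ n := by
    have htx : t x = x * z := by rw [hz, mul_inv_cancel_left]
    have hzn : z * (z ^ n)⁻¹ = z ^ n := by
      rw [mul_inv_eq_iff_eq_mul, ← (Commute.refl z).mul_zpow, ← sq, hn]
    rw [map_mul, map_zpow, htz, htx, inv_zpow, mul_assoc, hzn]
  rw [← mul_inv_cancel_right x (z ^ n)]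
  exact Subgroup.mul_mem_sup (hS _ hfixed) (inv_mem (Subgroup.zpow_mem_zpowers z n))

theorem inv_mul_map_notMem (hodd : Odd (Nat.card G)) {t : MulAut G}
    (ht : Function.Involutive t) {S : Subgroup G} (hS : ∀ x, t x = x → x ∈ S) {x : G}
    (hx : x ∉ S) : x⁻¹ * t x ∉ S := by
  intro hmem
  have hsup := mem_sup_zpowers_inv_mul_map hodd ht hS x
  rw [sup_eq_left.mpr (Subgroup.zpowers_le.mpr hmem)] at hsup
  exact hx hsup

theorem abelianization_of_map_eq_inv (hodd : Odd (Nat.card G)) {t : MulAut G}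
    (ht : Function.Involutive t) (hfix : ∀ x, t x = x → x ∈ frattini G) (x : G) :
    Abelianization.of (t x) = (Abelianization.of x)⁻¹ := by
  have : Finite G := Nat.finite_of_card_ne_zero hodd.pos.ne'
  let f : G →* Abelianization G :=
    Abelianization.of * Abelianization.of.comp t.toMonoidHom
  have hf (y : G) : f y = Abelianization.of y * Abelianization.of (t y) := rfl
  have hker : f.ker = ⊤ := by
    refine frattini_nongenerating ((Subgroup.eq_top_iff' _).mpr fun y => ?_)
    have hy : y⁻¹ * t y ∈ f.ker := by
      rw [MonoidHom.mem_ker, hf, ← map_mul, map_mul t, map_inv t, ht]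
      simp
    rw [sup_comm]
    exact sup_le_sup_left (Subgroup.zpowers_le.mpr hy) _
      (mem_sup_zpowers_inv_mul_map hodd ht hfix y)
  have hx : f x = 1 := MonoidHom.mem_ker.mp (hker ▸ Subgroup.mem_top x)
  exact eq_inv_of_mul_eq_one_right hx

open scoped commutatorElement in
theorem abelianization_of_commutatorElement_apply {t : MulAut G}
    (ht : ∀ x, Abelianization.of (t x) = (Abelianization.of x)⁻¹) (φ : MulAut G) (x : G) :
    Abelianization.of (⁅t, φ⁆ x) = Abelianization.of x := by
  have ht' (y : G) : Abelianization.of (t⁻¹ y) = (Abelianization.of y)⁻¹ := by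
    rw [← inv_inv (Abelianization.of (t⁻¹ y)), ← ht, MulAut.apply_inv_self]
  have hφ (y : G) : Abelianization.of (φ y) =
      Abelianization.map φ.toMonoidHom (Abelianization.of y) := rfl
  calc Abelianization.of (⁅t, φ⁆ x)
      = Abelianization.of (t (φ (t⁻¹ (φ⁻¹ x)))) := rfl
    _ = Abelianization.of (φ (φ⁻¹ x)) := by rw [ht, hφ, ht', map_inv, inv_inv, ← hφ]
    _ = Abelianization.of x := by rw [MulAut.apply_inv_self]

theorem isMulCommutative_of_forall_notMem_map_eq_inv (hodd : Odd (Nat.card G)) {S : Subgroup G}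
    (hS : S ≠ ⊤) {t : MulAut G} (ht : ∀ x ∉ S, t x = x⁻¹) : IsMulCommutative G := by
  have sq_mem {x : G} (hx : x ^ 2 ∈ S) : x ∈ S :=
    Subgroup.zpowers_le.mpr hx (mem_zpowers_sq hodd x)
  have comm_of_mul_notMem {x y : G} (hx : x ∉ S) (hy : y ∉ S) (hxy : x * y ∉ S) :
      Commute x y := by
    have h := ht _ hxy
    rw [map_mul, ht x hx, ht y hy, ← mul_inv_rev, inv_inj] at h
    exact h.symm
  have comm_off {x y : G} (hx : x ∉ S) (hy : y ∉ S) : Commute x y := by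
    by_cases hxy : x * y ∈ S
    · have hxy' : x * y⁻¹ ∉ S := fun h => hy <| sq_mem <| by
        simpa [sq, mul_assoc] using S.mul_mem (S.inv_mem h) hxy
      exact Commute.inv_right_iff.mp (comm_of_mul_notMem hx (mt inv_mem_iff.mp hy) hxy')
    · exact comm_of_mul_notMem hx hy hxy
  obtain ⟨a, ha⟩ : ∃ a, a ∉ S := by simpa [Subgroup.eq_top_iff'] using hS
  have comm_left {x : G} (hx : x ∉ S) (y : G) : Commute x y := by
    by_cases hy : y ∈ S
    · have hya : y * a ∉ S := mt (S.mul_mem_cancel_left hy).mp ha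
      simpa using (comm_off hx hya).mul_right (comm_off hx ha).inv_right
    · exact comm_off hx hy
  refine .of_comm fun x y => ?_
  by_cases hx : x ∈ S
  · have hxa : x * a ∉ S := mt (S.mul_mem_cancel_left hx).mp ha
    have h := (comm_left hxa y).mul_left (comm_left ha y).inv_left
    rwa [mul_inv_cancel_right] at h
  · exact comm_left hx y

end InvolutiveAutomorphism

section CyclicCommutator

variable {G : Type*} [Group G]

theorem exists_notMem_frattini_map_eq_self [IsCoatomic (Subgroup G)] [IsCyclic (commutator G)]
    (hcenter : commutator G ≤ Subgroup.center G) (hG : ¬ IsCyclic G) {k : MulAut G}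
    (hk : ∀ x, Abelianization.of (k x) = Abelianization.of x) : ∃ x ∉ frattini G, k x = x := by
  have hmem (x : G) : x⁻¹ * k x ∈ commutator G := by
    rw [← Abelianization.ker_of, MonoidHom.mem_ker, map_mul, map_inv, hk, inv_mul_cancel]
  let f : G →* commutator G := .mk' (fun x => ⟨x⁻¹ * k x, hmem x⟩) fun x y => Subtype.ext <| by
    have hcomm := Subgroup.mem_center_iff.mp (hcenter (hmem x)) y⁻¹
    calc (x * y)⁻¹ * k (x * y) = y⁻¹ * (x⁻¹ * k x) * k y := by rw [map_mul]; group
      _ = x⁻¹ * k x * (y⁻¹ * k y) := by rw [hcomm, mul_assoc]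
  obtain ⟨x, hx, hxS⟩ := SetLike.not_le_iff_exists.mp (mt (isCyclic_of_ker_le_frattini f) hG)
  have hfx : x⁻¹ * k x = 1 := congrArg Subtype.val (MonoidHom.mem_ker.mp hx)
  exact ⟨x, hxS, (inv_mul_eq_one.mp hfx).symm⟩

variable {A : Subgroup (MulAut G)}

open scoped commutatorElement in
theorem ActsRegularlyOn.commute_of_involutive [IsCyclic (commutator G)]
    (hA : ActsRegularlyOn A (frattini G : Set G)ᶜ) (hodd : Odd (Nat.card G))
    (hcenter : commutator G ≤ Subgroup.center G) (hG : ¬ IsCyclic G) {t : A}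
    (ht : Function.Involutive (t : MulAut G))
    (hfix : ∀ x, (t : MulAut G) x = x → x ∈ frattini G) (φ : A) : Commute t φ := by
  have : Finite G := Nat.finite_of_card_ne_zero hodd.pos.ne'
  obtain ⟨x, hx, hfixed⟩ := exists_notMem_frattini_map_eq_self hcenter hG
    (abelianization_of_commutatorElement_apply (abelianization_of_map_eq_inv hodd ht hfix) φ)
  exact commutatorElement_eq_one_iff_commute.mp (hA.eq_one_of_smul_eq ⁅t, φ⁆ x hx hfixed)

theorem ActsRegularlyOn.odd_card [IsCyclic (commutator G)]
    (hA : ActsRegularlyOn A (frattini G : Set G)ᶜ) (hodd : Odd (Nat.card G))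
    (hcenter : commutator G ≤ Subgroup.center G) (hG : ¬ IsMulCommutative G) :
    Odd (Nat.card A) := by
  have : Finite G := Nat.finite_of_card_ne_zero hodd.pos.ne'
  have hcyc : ¬ IsCyclic G := fun _ => hG inferInstance
  have htop : frattini G ≠ ⊤ := fun h =>
    hcyc (isCyclic_of_ker_le_frattini (1 : G →* Unit) (h ▸ le_top))
  by_contra heven
  obtain ⟨t, ht⟩ := exists_prime_orderOf_dvd_card' (G := A) 2
    (Nat.not_odd_iff_even.mp heven).two_dvd
  obtain ⟨htsq, ht1⟩ := orderOf_eq_prime_iff.mp ht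
  have hinv : Function.Involutive (t : MulAut G) := fun x =>
    DFunLike.congr_fun (congrArg Subtype.val ((sq t).symm.trans htsq)) x
  have hfix (x : G) (hx : (t : MulAut G) x = x) : x ∈ frattini G := by
    by_contra hxS
    exact ht1 (hA.eq_one_of_smul_eq t x hxS hx)
  obtain ⟨a, ha⟩ : ∃ a, a ∉ frattini G := by simpa [Subgroup.eq_top_iff'] using htop
  refine hG (isMulCommutative_of_forall_notMem_map_eq_inv hodd htop (t := t) fun y hy => ?_)
  obtain ⟨φ, rfl⟩ := hA.exists_smul_eq (a⁻¹ * (t : MulAut G) a)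
    (inv_mul_map_notMem hodd hinv hfix ha) y hy
  have hcomm : (t : MulAut G) * φ = φ * t :=
    congrArg Subtype.val (hA.commute_of_involutive hodd hcenter hcyc hinv hfix φ)
  change ((t : MulAut G) * φ) _ = ((φ : MulAut G) _)⁻¹
  rw [hcomm, MulAut.mul_apply, ← map_inv, map_mul, map_inv, hinv, mul_inv_rev, inv_inv]

theorem univ_ne_orbit_union_frattini {p k : ℕ} [Fact p.Prime] (hp : Odd p)
    (hcard : Nat.card G = p ^ k) [IsCyclic (commutator G)]
    (hcenter : commutator G ≤ Subgroup.center G) (hG : ¬ IsMulCommutative G)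
    (hA : Nat.card A = p ^ (k - 2) * (p ^ 2 - 1)) (g : G) :
    Set.univ ≠ MulAction.orbit A g ∪ frattini G := by
  intro hcover
  have hodd : Odd (Nat.card G) := hcard ▸ hp.pow
  have : Finite G := Nat.finite_of_card_ne_zero hodd.pos.ne'
  have hreg : ActsRegularlyOn A (frattini G : Set G)ᶜ := by
    refine actsRegularlyOn_of_subset_orbit (a := g) ?_
      (hA.trans_le (le_ncard_compl_frattini hcard fun _ => hG inferInstance))
    rw [Set.compl_subset_iff_union, Set.union_comm, hcover]
  have heven : Even (Nat.card A) := hA ▸ (Nat.Odd.sub_odd hp.pow odd_one).mul_left _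
  exact Nat.not_odd_iff_even.mpr heven (hreg.odd_card hodd hcenter hG)

end CyclicCommutator

namespace GCar

variable {p m n d : ℕ}

theorem card_eq : Nat.card (GCar p m n d) = p ^ (m + n + d) := by
  change Nat.card (ZMod (p ^ m) × ZMod (p ^ n) × ZMod (p ^ d)) = _
  simp only [Nat.card_prod, Nat.card_zmod, pow_add, mul_assoc]

/-- `G(p^m, p^n, p^d)` as a group instance; the inequalities `d ≤ n` and `d ≤ m`, without which the
multiplication need not be associative, are supplied through `Fact`. -/
instance [hdn : Fact (d ≤ n)] [hdm : Fact (d ≤ m)] : Group (GCar p m n d) :=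
  Ggroup p m n d hdn.out hdm.out

variable [Fact (d ≤ n)] [Fact (d ≤ m)]

/-- The element `a ^ u * b ^ v * c ^ w` of `G(p^m, p^n, p^d)`, with `GCar` rather than the product
type as its syntactic type. -/
def mk (u : ZMod (p ^ m)) (v : ZMod (p ^ n)) (w : ZMod (p ^ d)) : GCar p m n d := (u, v, w)

theorem mk_mul_mk (u u' : ZMod (p ^ m)) (v v' : ZMod (p ^ n)) (w w' : ZMod (p ^ d)) :
    (mk u v w * mk u' v' w' : GCar p m n d) =
      mk (u + u') (v + v') (w + w' - (v.cast : ZMod (p ^ d)) * (u'.cast : ZMod (p ^ d))) :=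
  rfl

/-- The projection `G(p^m, p^n, p^d) → ℤ/p^m × ℤ/p^n` onto the exponents of `a` and `b`. Its target
is abelian, so its kernel bounds the commutator subgroup from above. -/
def toAbelian (p m n d : ℕ) [Fact (d ≤ n)] [Fact (d ≤ m)] :
    GCar p m n d →* Multiplicative (ZMod (p ^ m) × ZMod (p ^ n)) where
  toFun x := .ofAdd (x.1, x.2.1)
  map_one' := rfl
  map_mul' _ _ := rfl

/-- The parametrization `w ↦ c ^ w` of the central subgroup of `G(p^m, p^n, p^d)` generated by `c`,
from which that subgroup inherits cyclicity. -/
def powC (p m n d : ℕ) [Fact (d ≤ n)] [Fact (d ≤ m)] :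
    Multiplicative (ZMod (p ^ d)) →* GCar p m n d where
  toFun w := mk 0 0 w.toAdd
  map_one' := rfl
  map_mul' v w := by simp [mk_mul_mk]

theorem ker_toAbelian_le_range_powC : (toAbelian p m n d).ker ≤ (powC p m n d).range := by
  rintro ⟨x, y, z⟩ hxyz
  obtain ⟨rfl, rfl⟩ : x = 0 ∧ y = 0 := Prod.ext_iff.mp hxyz
  exact ⟨.ofAdd z, rfl⟩

theorem range_powC_le_center : (powC p m n d).range ≤ Subgroup.center (GCar p m n d) := by
  rintro _ ⟨w, rfl⟩
  rw [Subgroup.mem_center_iff]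
  rintro ⟨x, y, z⟩
  change mk x y z * mk 0 0 w.toAdd = mk 0 0 w.toAdd * mk x y z
  simp [mk_mul_mk, add_comm]

theorem commutator_le_range_powC : commutator (GCar p m n d) ≤ (powC p m n d).range :=
  (Abelianization.commutator_subset_ker _).trans ker_toAbelian_le_range_powC

theorem commutator_le_center : commutator (GCar p m n d) ≤ Subgroup.center (GCar p m n d) :=
  commutator_le_range_powC.trans range_powC_le_center

instance : IsCyclic (commutator (GCar p m n d)) :=
  have : IsCyclic (powC p m n d).range :=
    isCyclic_of_surjective _ (powC p m n d).rangeRestrict_surjective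
  isCyclic_of_injective _ (Subgroup.inclusion_injective commutator_le_range_powC)

theorem not_isMulCommutative (hp : 1 < p) (hd : d ≠ 0) : ¬ IsMulCommutative (GCar p m n d) := by
  intro _
  have hdn : d ≤ n := Fact.out
  have hdm : d ≤ m := Fact.out
  have : Fact (1 < p ^ d) := ⟨Nat.one_lt_pow hd hp⟩
  have hab : (mk 1 0 0 * mk 0 1 0 : GCar p m n d) = mk 0 1 0 * mk 1 0 0 := mul_comm' _ _
  rw [mk_mul_mk, mk_mul_mk] at hab
  have hthird := congrArg (fun x : GCar p m n d => x.2.2) hab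
  simp [mk, ZMod.cast_one (pow_dvd_pow p hdn),
    ZMod.cast_one (pow_dvd_pow p hdm)] at hthird

end GCar

theorem ne_orbit_union_frattini_general (p m n d : ℕ) (hp : p.Prime) (hodd : Odd p) (hd : d ≠ 0)
    (hdn : d ≤ n) (hdm : d ≤ m) :
    letI : Group (GCar p m n d) := Ggroup p m n d hdn hdm
    ∀ (A : Subgroup (MulAut (GCar p m n d))) (g : GCar p m n d),
      Nat.card A = p ^ (m + n + d - 2) * (p ^ 2 - 1) →
      (Set.univ : Set (GCar p m n d)) ≠
        (fun φ : MulAut (GCar p m n d) => φ g) '' ↑A ∪ ↑(frattini (GCar p m n d)) := by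
  intro A g hA
  have : Fact p.Prime := ⟨hp⟩
  have : Fact (d ≤ n) := ⟨hdn⟩
  have : Fact (d ≤ m) := ⟨hdm⟩
  rw [Set.image_eq_range]
  exact univ_ne_orbit_union_frattini hodd GCar.card_eq GCar.commutator_le_center
    (GCar.not_isMulCommutative hp.one_lt hd) hA g

/-- Let `p` be an odd prime, `m > 1`, `d > 1`, `G = G(p^m, p^m, p^d)`. If `A` is a
subgroup of `Aut(G)` of order `p^(2m+d-2)·(p²-1)` containing a normal Sylow
`p`-subgroup, and `g ∈ G` has order `p^m`, then `G ≠ g^A ∪ Φ(G)`. -/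
theorem ne_orbit_union_frattini (p m d : ℕ) (hp : p.Prime) (hodd : Odd p)
    (hm : 1 < m) (hd : 1 < d) (hdm : d ≤ m) :
    letI : Group (GCar p m m d) := Ggroup p m m d hdm hdm
    ∀ (A : Subgroup (MulAut (GCar p m m d))) (g : GCar p m m d),
      Nat.card A = p ^ (2 * m + d - 2) * (p ^ 2 - 1) →
      (∃ P : Sylow p A, (P : Subgroup A).Normal) →
      orderOf g = p ^ m →
      (Set.univ : Set (GCar p m m d)) ≠
        (fun φ : MulAut (GCar p m m d) => φ g) '' ↑A ∪ ↑(frattini (GCar p m m d)) := by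
  intro A g hA _ _
  exact ne_orbit_union_frattini_general p m m d hp hodd (by omega) hdm hdm A g (two_mul m ▸ hA)
end

section
/- Let p be an odd prime and 1 ≤ d ≤ n ≤ m. On the set R = (ℤ/p^m) × (ℤ/p^n) × (ℤ/p^d), equip R with the addition (x1,x2,x3)+(y1,y2,y3) = (x1+y1, x2+y2, x3+y3 − x̄2·ȳ1) (bars denoting reduction mod p^d) and the multiplication (x1,x2,x3)·(y1,y2,y3) = (x1·y1, x2·y1 + x1·y2, −x̄1·x̄2·binom(y1,2) + x̄3·ȳ1 + x̄1²·ȳ3), where binom(y1,2) = y1(y1−1)/2 is computed from an integer representative of y1 and reduced mod p^d. Then R is a zero-symmetric local nearring with identity (1,0,0), whose additive group is the group G(p^m,p^n,p^d), and whose non-invertible elements are exactly the triples (x1,x2,x3) with p ∣ x1. -/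
/-- A (left) nearring with (multiplicative) identity: `(R,+)` is a (not necessarily
abelian) group with neutral element `0`, `(R,·)` is a monoid (so with identity
element `i = 1`), and the left distributive law `x·(y+z) = x·y + x·z` holds. -/
class LeftNearring (R : Type*) extends AddGroup R, Monoid R where
  left_distrib : ∀ x y z : R, x * (y + z) = x * y + x * z

/-- The multiplication `(x1,x2,x3)·(y1,y2,y3) =
(x1·y1, x2·y1 + x1·y2, −x̄1·x̄2·binom(y1,2) + x̄3·ȳ1 + x̄1²·ȳ3)` on the carrier
`ZMod (p^m) × ZMod (p^n) × ZMod (p^d)`, where the bars denote reduction modulo `p^d`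
(resp. modulo `p^n` in the second component) and `binom(y1,2) = y1(y1−1)/2` is
computed from the canonical integer representative of `y1` and reduced mod `p^d`. -/
def Nmul (p m n d : ℕ) (x y : GCar p m n d) : GCar p m n d :=
  (x.1 * y.1,
    x.2.1 * (ZMod.cast y.1 : ZMod (p ^ n)) + (ZMod.cast x.1 : ZMod (p ^ n)) * y.2.1,
    -((ZMod.cast x.1 : ZMod (p ^ d)) * (ZMod.cast x.2.1 : ZMod (p ^ d)) *
        ((y.1.val.choose 2 : ℕ) : ZMod (p ^ d))) +
      x.2.2 * (ZMod.cast y.1 : ZMod (p ^ d)) +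
      (ZMod.cast x.1 : ZMod (p ^ d)) ^ 2 * y.2.2)

/-- `NearringProps T add mul e nonunit` says that the nearring structure on `T` has
addition `add`, multiplication `mul` and multiplicative identity `e`, that it is
zero-symmetric, that its non-invertible elements are exactly those satisfying
`nonunit`, and that it is local (the non-invertible elements form a subgroup of
`(T,+)`). -/
def NearringProps (T : Type*) [LeftNearring T] (add mul : T → T → T) (e : T)
    (nonunit : T → Prop) : Prop :=
  (∀ x y : T, x + y = add x y) ∧
  (∀ x y : T, x * y = mul x y) ∧
  (1 : T) = e ∧
  (∀ x : T, (0 : T) * x = 0) ∧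
  (∀ x : T, ¬IsUnit x ↔ nonunit x) ∧
  ∃ L : AddSubgroup T, ∀ x : T, x ∈ L ↔ ¬IsUnit x

/-!
Over a tower of commutative rings `A → B → C`, the two operations make sense on `A × B × C` as soon
as `binom(·, 2)` is replaced by any map `β : A → C` with `β (a + b) = β a + β b + a b` and
`β (a b) = β a * b + a² * β b`. The first identity is left distributivity, the second one is
associativity of the multiplication, and `β 1 = 0` makes `(1, 0, 0)` an identity. The projection to
`A` preserves both operations and reflects units, so the nearring is local whenever `A` is.

On `ℤ/p^m` the map `y ↦ binom(y, 2)` is computed from a representative, so it does not inherit the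
two identities from `ℤ`; but for odd `p` it is determined by `2 * binom(y, 2) = y (y - 1)`, from
which both follow after cancelling `2`.
-/

theorem two_mul_natCast_choose_two {R : Type*} [Ring R] (k : ℕ) :
    2 * ((k.choose 2 : ℕ) : R) = k * (k - 1) := by
  rw [← Nat.cast_descFactorial_two, Nat.descFactorial_eq_factorial_mul_choose]
  simp

/-- A map `A → C` obeying the addition and multiplication rules of `a ↦ a.choose 2`, with values
read in an `A`-algebra `C`. It stands for `binom(·, 2)` in rings without division by two. -/
structure ChooseTwo (A C : Type*) [CommRing A] [CommRing C] [Algebra A C] where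
  toFun : A → C
  map_add : ∀ a b, toFun (a + b) = toFun a + toFun b + algebraMap A C a * algebraMap A C b
  map_mul : ∀ a b, toFun (a * b) = toFun a * algebraMap A C b + algebraMap A C a ^ 2 * toFun b

namespace ChooseTwo

variable {A C : Type*} [CommRing A] [CommRing C] [Algebra A C]

instance : CoeFun (ChooseTwo A C) fun _ => A → C := ⟨toFun⟩

theorem map_one (β : ChooseTwo A C) : β 1 = 0 := by
  simpa using β.map_mul 1 1

/-- The map `a ↦ a (a - 1) / 2` into an algebra in which `2` is invertible. The values are given as
a function `f` so that they can be computed by a formula other than division by two. -/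
def ofTwoMul (h2 : IsUnit (2 : C)) (f : A → C)
    (hf : ∀ a, 2 * f a = algebraMap A C a * (algebraMap A C a - 1)) : ChooseTwo A C where
  toFun := f
  map_add a b := h2.mul_left_cancel <| by
    have hab := hf (a + b)
    rw [_root_.map_add] at hab
    linear_combination hab - hf a - hf b
  map_mul a b := h2.mul_left_cancel <| by
    have hab := hf (a * b)
    rw [_root_.map_mul] at hab
    linear_combination hab - algebraMap A C b * hf a - algebraMap A C a ^ 2 * hf b

/-- The map `y ↦ binom(y, 2)` on `ZMod a`, computed from the representative of `y` in `[0, a)`. -/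
def ofZMod (a : ℕ) [NeZero a] {C : Type*} [CommRing C] [Algebra (ZMod a) C]
    (h2 : IsUnit (2 : C)) : ChooseTwo (ZMod a) C :=
  ofTwoMul h2 (fun y => (y.val.choose 2 : ℕ)) fun y => by
    have hy : algebraMap (ZMod a) C y = y.val := by
      rw [← map_natCast (algebraMap (ZMod a) C), ZMod.natCast_zmod_val]
    rw [two_mul_natCast_choose_two, hy]

end ChooseTwo

/-- The triples over a tower `A → B → C`, carrying the nearring operations defined by `β`: the
addition of `G(p^m, p^n, p^d)`, and its multiplication with `β` in place of `binom(·, 2)`. This is a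
type synonym, so that the operations do not clash with the componentwise ones. -/
def TripleNearring {A C : Type*} (B : Type*) [CommRing A] [CommRing C] [Algebra A C]
    (_β : ChooseTwo A C) : Type _ :=
  A × B × C

namespace TripleNearring

variable {A B C : Type*} [CommRing A] [CommRing C] [Algebra A C] {β : ChooseTwo A C}

@[ext]
theorem ext {x y : TripleNearring B β} (h₁ : x.1 = y.1) (h₂ : x.2.1 = y.2.1)
    (h₃ : x.2.2 = y.2.2) : x = y :=
  Prod.ext h₁ (Prod.ext h₂ h₃)

variable [CommRing B]

instance : Zero (TripleNearring B β) := ⟨((0, 0, 0) : A × B × C)⟩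

@[simp] theorem zero_fst : (0 : TripleNearring B β).1 = 0 := rfl
@[simp] theorem zero_snd_fst : (0 : TripleNearring B β).2.1 = 0 := rfl
@[simp] theorem zero_snd_snd : (0 : TripleNearring B β).2.2 = 0 := rfl

instance : One (TripleNearring B β) := ⟨((1, 0, 0) : A × B × C)⟩

@[simp] theorem one_fst : (1 : TripleNearring B β).1 = 1 := rfl
@[simp] theorem one_snd_fst : (1 : TripleNearring B β).2.1 = 0 := rfl
@[simp] theorem one_snd_snd : (1 : TripleNearring B β).2.2 = 0 := rfl

section AddGroup

variable [Algebra B C] (x y z : TripleNearring B β)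

instance : Neg (TripleNearring B β) :=
  ⟨fun x => ((-x.1, -x.2.1, -x.2.2 - algebraMap B C x.2.1 * algebraMap A C x.1) : A × B × C)⟩

@[simp] theorem neg_fst : (-x).1 = -x.1 := rfl
@[simp] theorem neg_snd_fst : (-x).2.1 = -x.2.1 := rfl
@[simp] theorem neg_snd_snd :
    (-x).2.2 = -x.2.2 - algebraMap B C x.2.1 * algebraMap A C x.1 := rfl

instance : Add (TripleNearring B β) :=
  ⟨fun x y => ((x.1 + y.1, x.2.1 + y.2.1,
    x.2.2 + y.2.2 - algebraMap B C x.2.1 * algebraMap A C y.1) : A × B × C)⟩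

@[simp] theorem add_fst : (x + y).1 = x.1 + y.1 := rfl
@[simp] theorem add_snd_fst : (x + y).2.1 = x.2.1 + y.2.1 := rfl
@[simp] theorem add_snd_snd :
    (x + y).2.2 = x.2.2 + y.2.2 - algebraMap B C x.2.1 * algebraMap A C y.1 := rfl

protected theorem add_assoc : x + y + z = x + (y + z) := by
  ext
  · simp only [add_fst, add_assoc]
  · simp only [add_snd_fst, add_assoc]
  · simp only [add_fst, add_snd_fst, add_snd_snd, map_add]
    ring

protected theorem zero_add : 0 + x = x := by
  ext <;> simp

protected theorem neg_add_cancel : -x + x = 0 := by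
  ext
  · simp
  · simp
  · simp only [add_snd_snd, neg_snd_fst, neg_snd_snd, zero_snd_snd, map_neg]
    ring

instance : AddGroup (TripleNearring B β) :=
  .ofLeftAxioms TripleNearring.add_assoc TripleNearring.zero_add TripleNearring.neg_add_cancel

/-- The first coordinate as a homomorphism of additive groups. -/
def fstAddHom : TripleNearring B β →+ A where
  toFun x := x.1
  map_zero' := zero_fst
  map_add' := add_fst

end AddGroup

variable [Algebra A B] [Algebra B C]

section Monoid

instance : Mul (TripleNearring B β) :=
  ⟨fun x y => ((x.1 * y.1, x.2.1 * algebraMap A B y.1 + algebraMap A B x.1 * y.2.1,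
    -(algebraMap A C x.1 * algebraMap B C x.2.1 * β y.1) + x.2.2 * algebraMap A C y.1 +
      algebraMap A C x.1 ^ 2 * y.2.2) : A × B × C)⟩

variable (x y z : TripleNearring B β)

@[simp] theorem mul_fst : (x * y).1 = x.1 * y.1 := rfl
@[simp] theorem mul_snd_fst :
    (x * y).2.1 = x.2.1 * algebraMap A B y.1 + algebraMap A B x.1 * y.2.1 := rfl
@[simp] theorem mul_snd_snd :
    (x * y).2.2 = -(algebraMap A C x.1 * algebraMap B C x.2.1 * β y.1) +
      x.2.2 * algebraMap A C y.1 + algebraMap A C x.1 ^ 2 * y.2.2 := rfl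

protected theorem zero_mul : 0 * x = 0 := by
  ext <;> simp

protected theorem one_mul : 1 * x = x := by
  ext <;> simp

protected theorem mul_one : x * 1 = x := by
  ext <;> simp [β.map_one]

end Monoid

section Tower

variable [IsScalarTower A B C] (x y z : TripleNearring B β)

theorem algebraMap_mul_snd_fst :
    algebraMap B C (x * y).2.1 =
      algebraMap B C x.2.1 * algebraMap A C y.1 + algebraMap A C x.1 * algebraMap B C y.2.1 := by
  simp [← IsScalarTower.algebraMap_apply]

protected theorem mul_assoc : x * y * z = x * (y * z) := by
  ext
  · simp only [mul_fst, mul_assoc]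
  · simp only [mul_fst, mul_snd_fst, map_mul]
    ring
  · simp only [mul_fst, mul_snd_snd, algebraMap_mul_snd_fst, map_mul, β.map_mul]
    ring

protected theorem mul_add : x * (y + z) = x * y + x * z := by
  ext
  · simp only [mul_fst, add_fst, mul_add]
  · simp only [mul_snd_fst, add_fst, add_snd_fst, map_add]
    ring
  · simp only [mul_fst, mul_snd_snd, add_fst, add_snd_snd, algebraMap_mul_snd_fst, map_add,
      map_mul, β.map_add]
    ring

end Tower

/-- The inverse of `x` as a function of the inverse `v` of its first coordinate, obtained by solving
`x * y = 1` for the remaining coordinates of `y`. -/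
def invOfFst (x : TripleNearring B β) (v : A) : TripleNearring B β :=
  ((v, -(x.2.1 * algebraMap A B v ^ 2),
    (algebraMap A C x.1 * algebraMap B C x.2.1 * β v - x.2.2 * algebraMap A C v) *
      algebraMap A C v ^ 2) : A × B × C)

section InvOfFst

variable {x : TripleNearring B β} {v : A}

@[simp] theorem invOfFst_fst : (invOfFst x v).1 = v := rfl
@[simp] theorem invOfFst_snd_fst :
    (invOfFst x v).2.1 = -(x.2.1 * algebraMap A B v ^ 2) := rfl
@[simp] theorem invOfFst_snd_snd :
    (invOfFst x v).2.2 =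
      (algebraMap A C x.1 * algebraMap B C x.2.1 * β v - x.2.2 * algebraMap A C v) *
        algebraMap A C v ^ 2 := rfl

theorem mul_invOfFst (hv : x.1 * v = 1) : x * invOfFst x v = 1 := by
  have hB : algebraMap A B x.1 * algebraMap A B v = 1 := by rw [← map_mul, hv, map_one]
  have hC : algebraMap A C x.1 * algebraMap A C v = 1 := by rw [← map_mul, hv, map_one]
  ext
  · exact hv
  · simp only [invOfFst_fst, invOfFst_snd_fst, mul_snd_fst, one_snd_fst]
    linear_combination -x.2.1 * algebraMap A B v * hB
  · simp only [invOfFst_fst, invOfFst_snd_snd, mul_snd_snd, one_snd_snd]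
    linear_combination
      (algebraMap A C x.1 * algebraMap B C x.2.1 * β v - x.2.2 * algebraMap A C v) *
        (algebraMap A C x.1 * algebraMap A C v + 1) * hC

theorem invOfFst_mul [IsScalarTower A B C] (hv : x.1 * v = 1) : invOfFst x v * x = 1 := by
  have hB : algebraMap A B x.1 * algebraMap A B v = 1 := by rw [← map_mul, hv, map_one]
  have hC : algebraMap A C x.1 * algebraMap A C v = 1 := by rw [← map_mul, hv, map_one]
  have hβ : β x.1 * algebraMap A C v + algebraMap A C x.1 ^ 2 * β v = 0 := by
    rw [← β.map_mul, hv, β.map_one]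
  ext
  · exact (mul_comm v x.1).trans hv
  · simp only [invOfFst_fst, invOfFst_snd_fst, mul_snd_fst, one_snd_fst]
    linear_combination -x.2.1 * algebraMap A B v * hB
  · simp only [invOfFst_fst, invOfFst_snd_fst, invOfFst_snd_snd, mul_snd_snd, one_snd_snd, map_neg,
      map_mul, map_pow, ← IsScalarTower.algebraMap_apply]
    linear_combination algebraMap B C x.2.1 * algebraMap A C v ^ 2 * hβ -
      x.2.2 * algebraMap A C v ^ 2 * hC

end InvOfFst

variable [IsScalarTower A B C]

instance : LeftNearring (TripleNearring B β) where
  mul_assoc := TripleNearring.mul_assoc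
  one_mul := TripleNearring.one_mul
  mul_one := TripleNearring.mul_one
  left_distrib := TripleNearring.mul_add

/-- The first coordinate as a homomorphism of multiplicative monoids. -/
def fstMonoidHom : TripleNearring B β →* A where
  toFun x := x.1
  map_one' := one_fst
  map_mul' := mul_fst

theorem isUnit_iff_isUnit_fst (x : TripleNearring B β) : IsUnit x ↔ IsUnit x.1 := by
  refine ⟨fun hx => hx.map fstMonoidHom, fun hx => ?_⟩
  obtain ⟨v, hv⟩ := hx.exists_right_inv
  exact isUnit_iff_exists.mpr ⟨invOfFst x v, mul_invOfFst hv, invOfFst_mul hv⟩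

/-- The non-invertible elements, as an additive subgroup: the triples whose first coordinate lies in
the maximal ideal of `A`. -/
def nonunitsAddSubgroup [IsLocalRing A] : AddSubgroup (TripleNearring B β) :=
  (IsLocalRing.maximalIdeal A).toAddSubgroup.comap fstAddHom

theorem mem_nonunitsAddSubgroup [IsLocalRing A] (x : TripleNearring B β) :
    x ∈ nonunitsAddSubgroup ↔ ¬IsUnit x := by
  rw [isUnit_iff_isUnit_fst]
  exact IsLocalRing.mem_maximalIdeal x.1

end TripleNearring

section PrimePower

variable {p : ℕ} [Fact p.Prime]

theorem isLocalRing_zmod_prime_pow {k : ℕ} (hk : k ≠ 0) : IsLocalRing (ZMod (p ^ k)) :=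
  have : Fact (1 < p ^ k) := ⟨Nat.one_lt_pow hk (Fact.out : p.Prime).one_lt⟩
  IsLocalRing.of_surjective' (PadicInt.toZModPow k) (ZMod.ringHom_surjective _)

theorem not_isUnit_zmod_prime_pow_iff {k : ℕ} (hk : k ≠ 0) (x : ZMod (p ^ k)) :
    ¬IsUnit x ↔ p ∣ x.val := by
  rw [← ZMod.natCast_zmod_val x, ZMod.isUnit_natCast_iff_not_dvd_pow Fact.out hk.bot_lt, not_not,
    ZMod.natCast_zmod_val]

end PrimePower

/-- For an odd prime `p` and `1 ≤ d ≤ n ≤ m`, the carrier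
`ZMod (p^m) × ZMod (p^n) × ZMod (p^d)` equipped with the addition `Gmul` (the group
operation of `G(p^m,p^n,p^d)`) and the multiplication `Nmul` is a zero-symmetric
local nearring with identity `(1,0,0)` whose additive group is `G(p^m,p^n,p^d)` and
whose non-invertible elements are exactly the triples `(x1,x2,x3)` with `p ∣ x1`. -/
theorem explicit_local_nearring (p m n d : ℕ) (hp : p.Prime) (hodd : Odd p)
    (hd : 1 ≤ d) (hdn : d ≤ n) (hnm : n ≤ m) :
    ∃ inst : LeftNearring (GCar p m n d),
      @NearringProps (GCar p m n d) inst (Gmul p m n d) (Nmul p m n d)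
        ((1, 0, 0) : ZMod (p ^ m) × ZMod (p ^ n) × ZMod (p ^ d))
        (fun x => p ∣ x.1.val) := by
  have : Fact p.Prime := ⟨hp⟩
  have hm : m ≠ 0 := by lia
  have : IsLocalRing (ZMod (p ^ m)) := isLocalRing_zmod_prime_pow hm
  have h2 : IsUnit (2 : ZMod (p ^ d)) :=
    (ZMod.isUnit_iff_coprime 2 _).mpr (Nat.coprime_two_left.mpr hodd.pow)
  let := ZMod.algebra' (ZMod (p ^ n)) (p ^ n) (pow_dvd_pow p hnm)
  let := ZMod.algebra' (ZMod (p ^ d)) (p ^ d) (pow_dvd_pow p hdn)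
  let := ZMod.algebra' (ZMod (p ^ d)) (p ^ d) (pow_dvd_pow p (hdn.trans hnm))
  have : IsScalarTower (ZMod (p ^ m)) (ZMod (p ^ n)) (ZMod (p ^ d)) :=
    .of_algebraMap_eq' (Subsingleton.elim _ _)
  let β : ChooseTwo (ZMod (p ^ m)) (ZMod (p ^ d)) := .ofZMod (p ^ m) h2
  refine ⟨(inferInstance : LeftNearring (TripleNearring (ZMod (p ^ n)) β)), fun _ _ => rfl,
    fun _ _ => rfl, rfl, TripleNearring.zero_mul (β := β), fun x => ?_,
    TripleNearring.nonunitsAddSubgroup (β := β), TripleNearring.mem_nonunitsAddSubgroup (β := β)⟩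
  exact (TripleNearring.isUnit_iff_isUnit_fst (β := β) x).not.trans
    (not_isUnit_zmod_prime_pow_iff hm x.1)
end
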